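/- Let f be a probability density on ℝ^d. If T_f(ε₂, R₂) < ∞ for some ε₂ > 0 and R₂ > 0, then T_f(ε, R) < ∞ for every ε ∈ (0, ε₂] and every R > 0. -/

import Mathlib

open MeasureTheory ENNReal Set Filter ProbabilityTheory Matrix

noncomputable section

/-- `ℝ^d` with the Euclidean distance. -/
abbrev Euc (d : ℕ) := EuclideanSpace ℝ (Fin d)

/-- The volume `V_d = π^(d/2) / Γ(d/2 + 1)` of the unit ball in `ℝ^d`. -/
def Vd (d : ℕ) : ℝ := Real.pi ^ ((d : ℝ) / 2) / Real.Gamma ((d : ℝ) / 2 + 1)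

/-- `f` is a probability density on `ℝ^d` (w.r.t. Lebesgue measure). -/
def IsProbDensity {d : ℕ} (f : Euc d → ℝ) : Prop :=
  Measurable f ∧ (∀ x, 0 ≤ f x) ∧ ∫ x, f x = 1

/-- `G(t) = 0` for `t < 1` and `G(t) = t log t` for `t ≥ 1`. -/
def Gfun (t : ℝ) : ℝ := if t < 1 then 0 else t * Real.log t

/-- `I_f(x,r) = (∫_{B(x,r)} f) / (r^d V_d)`. -/
def If {d : ℕ} (f : Euc d → ℝ) (x : Euc d) (r : ℝ) : ℝ :=
  (∫ y in Metric.closedBall x r, f y) / (r ^ d * Vd d)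

/-- `M_f(x,R) = sup_{r ∈ (0,R]} I_f(x,r)` (with values in `[0,∞]`). -/
def Mf {d : ℕ} (f : Euc d → ℝ) (x : Euc d) (R : ℝ) : ℝ≥0∞ :=
  ⨆ r ∈ Ioc (0 : ℝ) R, ENNReal.ofReal (If f x r)

/-- `m_f(x,R) = inf_{r ∈ (0,R]} I_f(x,r)`. -/
def mf {d : ℕ} (f : Euc d → ℝ) (x : Euc d) (R : ℝ) : ℝ≥0∞ :=
  ⨅ r ∈ Ioc (0 : ℝ) R, ENNReal.ofReal (If f x r)

/-- `K_f(ε) = ∫ (∫ G(|log ρ(x,y)|) f(y) dy)^{1+ε} f(x) dx`, with values in `[0,∞]`. -/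
def Kf {d : ℕ} (f : Euc d → ℝ) (ε : ℝ) : ℝ≥0∞ :=
  ∫⁻ x, (∫⁻ y, ENNReal.ofReal (Gfun |Real.log (dist x y)|) * ENNReal.ofReal (f y)) ^ (1 + ε)
      * ENNReal.ofReal (f x)

/-- `K_{f,2}(ε) = ∫ (∫ G(log² ρ(x,y)) f(y) dy)^{1+ε} f(x) dx`. -/
def Kf2 {d : ℕ} (f : Euc d → ℝ) (ε : ℝ) : ℝ≥0∞ :=
  ∫⁻ x, (∫⁻ y, ENNReal.ofReal (Gfun ((Real.log (dist x y)) ^ 2)) * ENNReal.ofReal (f y)) ^ (1 + ε)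
      * ENNReal.ofReal (f x)

/-- `Q_f(ε,R) = ∫ M_f(x,R)^ε f(x) dx`. -/
def Qf {d : ℕ} (f : Euc d → ℝ) (ε R : ℝ) : ℝ≥0∞ :=
  ∫⁻ x, (Mf f x R) ^ ε * ENNReal.ofReal (f x)

/-- `T_f(ε,R) = ∫ m_f(x,R)^{-ε} f(x) dx` (with `0^{-ε} = ∞`). -/
def Tf {d : ℕ} (f : Euc d → ℝ) (ε R : ℝ) : ℝ≥0∞ :=
  ∫⁻ x, (mf f x R) ^ (-ε) * ENNReal.ofReal (f x)

/-- The differential Shannon entropy `H(f) = -∫ f log f`. -/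
def entropy {d : ℕ} (f : Euc d → ℝ) : ℝ := -∫ x, f x * Real.log (f x)

/-- The Euler–Mascheroni constant `γ = -∫_0^∞ e^{-t} log t dt`. -/
def eulerGamma : ℝ := -∫ t in Ioi (0 : ℝ), Real.exp (-t) * Real.log t

/-- `ρ_i`: the nearest-neighbour distance of `X i` within the sample `X 0, …, X (N-1)`. -/
def nnDist {d : ℕ} {Ω : Type*} (X : ℕ → Ω → Euc d) (N i : ℕ) (ω : Ω) : ℝ :=
  sInf {r : ℝ | ∃ j, j < N ∧ j ≠ i ∧ r = dist (X i ω) (X j ω)}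

/-- The Kozachenko–Leonenko estimate
`H_N = (d/N) Σ_{i<N} log ρ_i + log V_d + γ + log (N-1)`. -/
def KLest {d : ℕ} {Ω : Type*} (X : ℕ → Ω → Euc d) (N : ℕ) (ω : Ω) : ℝ :=
  ((d : ℝ) / N) * ∑ i ∈ Finset.range N, Real.log (nnDist X N i ω)
    + Real.log (Vd d) + eulerGamma + Real.log ((N : ℝ) - 1)

/-- The density of a nondegenerate Gaussian vector with mean `ν` and covariance `S`. -/
def gaussDensity {d : ℕ} (ν : Euc d) (S : Matrix (Fin d) (Fin d) ℝ) (x : Euc d) : ℝ :=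
  (2 * Real.pi) ^ (-(d : ℝ) / 2) * S.det ^ (-(1 : ℝ) / 2) *
    Real.exp (-(1 / 2) * (S⁻¹.mulVec (fun i => x i - ν i) ⬝ᵥ fun i => x i - ν i))

end

/-!
Since `∫_{B(x,r)} f` is nondecreasing in `r`, the ball averages satisfy
`(r / R) ^ d * I_f(x,r) ≤ I_f(x,R)` for `r ≤ R`. Hence enlarging the radius from `r` to `R` shrinks
`m_f` by at most the factor `(r / R) ^ d`, so it preserves finiteness of `T_f(ε,·)`. The exponent
is handled separately, by `a ^ (-ε) ≤ 1 + a ^ (-δ)` for `0 ≤ ε ≤ δ`, at the cost of adding the total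
mass of `f`.
-/

lemma ennreal_rpow_neg_le_mul_rpow_neg {a b c : ℝ≥0∞} {z : ℝ} (hc₀ : c ≠ 0) (hc : c ≠ ⊤)
    (hz : 0 ≤ z) (h : c * a ≤ b) : b ^ (-z) ≤ c ^ (-z) * a ^ (-z) := by
  have hcz₀ : c ^ z ≠ 0 := (ENNReal.rpow_pos (pos_iff_ne_zero.2 hc₀) hc).ne'
  have hcz : c ^ z ≠ ⊤ := ENNReal.rpow_ne_top_of_nonneg hz hc
  simp only [ENNReal.rpow_neg]
  calc (b ^ z)⁻¹ ≤ ((c * a) ^ z)⁻¹ := by gcongr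
    _ = (c ^ z)⁻¹ * (a ^ z)⁻¹ := by
      rw [ENNReal.mul_rpow_of_nonneg _ _ hz, ENNReal.mul_inv (.inl hcz₀) (.inl hcz)]

lemma ennreal_rpow_neg_le_one_add_rpow_neg (a : ℝ≥0∞) {ε δ : ℝ} (hε : 0 ≤ ε) (hεδ : ε ≤ δ) :
    a ^ (-ε) ≤ 1 + a ^ (-δ) := by
  rcases le_total 1 a with one_le | le_one
  · calc a ^ (-ε) ≤ a ^ (0 : ℝ) := ENNReal.rpow_le_rpow_of_exponent_le one_le (by linarith)
      _ = 1 := ENNReal.rpow_zero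
      _ ≤ 1 + a ^ (-δ) := le_self_add
  · calc a ^ (-ε) ≤ a ^ (-δ) := ENNReal.rpow_le_rpow_of_exponent_ge le_one (by linarith)
      _ ≤ 1 + a ^ (-δ) := le_add_self

lemma Vd_pos (d : ℕ) : 0 < Vd d :=
  div_pos (by positivity) (Real.Gamma_pos_of_pos (by positivity))

lemma IsProbDensity.integrable {d : ℕ} {f : Euc d → ℝ} (hf : IsProbDensity f) : Integrable f :=
  .of_integral_ne_zero (hf.2.2 ▸ one_ne_zero)

section Radius

variable {d : ℕ} {f : Euc d → ℝ} {r R : ℝ}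

lemma mf_antitone (f : Euc d → ℝ) (x : Euc d) : Antitone (mf f x) := fun _ _ hrR ↦
  biInf_mono fun _ hs ↦ Ioc_subset_Ioc_right hrR hs

lemma Tf_monotone (f : Euc d → ℝ) {ε : ℝ} (hε : 0 ≤ ε) : Monotone (Tf f ε) := fun r R hrR ↦ by
  refine lintegral_mono fun x ↦ ?_
  simp only [ENNReal.rpow_neg]
  gcongr
  exact mf_antitone f x hrR

lemma div_pow_mul_If_le_If (hf₀ : 0 ≤ᵐ[volume] f) (hf : LocallyIntegrable f) (x : Euc d)
    (hr : 0 < r) (hrR : r ≤ R) : (r / R) ^ d * If f x r ≤ If f x R := by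
  have hR : 0 < R := hr.trans_le hrR
  have hV := Vd_pos d
  have integral_le : ∫ y in Metric.closedBall x r, f y ≤ ∫ y in Metric.closedBall x R, f y :=
    setIntegral_mono_set (hf.integrableOn_isCompact (isCompact_closedBall x R))
      (ae_restrict_of_ae hf₀) (Metric.closedBall_subset_closedBall hrR).eventuallyLE
  calc (r / R) ^ d * If f x r = (∫ y in Metric.closedBall x r, f y) / (R ^ d * Vd d) := by
        rw [If, div_pow]
        field_simp
    _ ≤ If f x R := by
        rw [If]
        gcongr

lemma div_pow_mul_mf_le_mf (hf₀ : 0 ≤ᵐ[volume] f) (hf : LocallyIntegrable f) (x : Euc d)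
    (hr : 0 < r) (hrR : r ≤ R) : ENNReal.ofReal ((r / R) ^ d) * mf f x r ≤ mf f x R := by
  have hR : 0 < R := hr.trans_le hrR
  refine le_iInf₂ fun s ⟨hs, hsR⟩ ↦ ?_
  rcases le_total s r with hsr | hrs
  · have factor_le_one : ENNReal.ofReal ((r / R) ^ d) ≤ 1 :=
      ENNReal.ofReal_le_one.2 (pow_le_one₀ (by positivity) ((div_le_one hR).2 hrR))
    exact mul_le_of_le_one_of_le factor_le_one (iInf₂_le s ⟨hs, hsr⟩)
  · calc ENNReal.ofReal ((r / R) ^ d) * mf f x r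
        ≤ ENNReal.ofReal ((r / s) ^ d) * ENNReal.ofReal (If f x r) := by
          gcongr
          exact iInf₂_le r ⟨hr, le_rfl⟩
      _ = ENNReal.ofReal ((r / s) ^ d * If f x r) := (ENNReal.ofReal_mul (by positivity)).symm
      _ ≤ ENNReal.ofReal (If f x s) :=
          ENNReal.ofReal_le_ofReal (div_pow_mul_If_le_If hf₀ hf x hr hrs)

lemma Tf_le_div_pow_rpow_mul_Tf (hf₀ : 0 ≤ᵐ[volume] f) (hf : LocallyIntegrable f) {ε : ℝ}
    (hε : 0 ≤ ε) (hr : 0 < r) (hrR : r ≤ R) :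
    Tf f ε R ≤ ENNReal.ofReal ((r / R) ^ d) ^ (-ε) * Tf f ε r := by
  have hR : 0 < R := hr.trans_le hrR
  set c := ENNReal.ofReal ((r / R) ^ d)
  have hc₀ : c ≠ 0 := (ENNReal.ofReal_pos.2 (by positivity)).ne'
  have hc : c ≠ ⊤ := ENNReal.ofReal_ne_top
  calc Tf f ε R ≤ ∫⁻ x, c ^ (-ε) * (mf f x r ^ (-ε) * ENNReal.ofReal (f x)) := by
        refine lintegral_mono fun x ↦ ?_
        rw [← mul_assoc]
        gcongr
        exact ennreal_rpow_neg_le_mul_rpow_neg hc₀ hc hε (div_pow_mul_mf_le_mf hf₀ hf x hr hrR)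
    _ = c ^ (-ε) * Tf f ε r :=
        lintegral_const_mul' _ _ (ENNReal.rpow_ne_top_of_ne_zero hc₀ hc)

lemma Tf_lt_top_of_Tf_lt_top_radius (hf₀ : 0 ≤ᵐ[volume] f) (hf : LocallyIntegrable f) {ε : ℝ}
    (hε : 0 ≤ ε) (hr : 0 < r) (hT : Tf f ε r < ⊤) (R : ℝ) : Tf f ε R < ⊤ :=
  calc Tf f ε R ≤ Tf f ε (max r R) := Tf_monotone f hε (le_max_right r R)
    _ ≤ ENNReal.ofReal ((r / max r R) ^ d) ^ (-ε) * Tf f ε r :=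
        Tf_le_div_pow_rpow_mul_Tf hf₀ hf hε hr (le_max_left r R)
    _ < ⊤ := ENNReal.mul_lt_top (ENNReal.rpow_ne_top_of_ne_zero
        (ENNReal.ofReal_pos.2 (by positivity)).ne' ENNReal.ofReal_ne_top).lt_top hT

end Radius

lemma Tf_le_lintegral_add_Tf {d : ℕ} {f : Euc d → ℝ} (hf : AEMeasurable f) {ε δ : ℝ}
    (hε : 0 ≤ ε) (hεδ : ε ≤ δ) (R : ℝ) :
    Tf f ε R ≤ (∫⁻ x, ENNReal.ofReal (f x)) + Tf f δ R :=
  calc Tf f ε R ≤ ∫⁻ x, (ENNReal.ofReal (f x) + mf f x R ^ (-δ) * ENNReal.ofReal (f x)) := by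
        refine lintegral_mono fun x ↦ ?_
        rw [← one_add_mul]
        gcongr
        exact ennreal_rpow_neg_le_one_add_rpow_neg _ hε hεδ
    _ = (∫⁻ x, ENNReal.ofReal (f x)) + Tf f δ R := lintegral_add_left' hf.ennreal_ofReal _

/-- Lemma 2, part 3: if `T_f(ε₂,R₂) < ∞` for some `ε₂ > 0`, `R₂ > 0` then `T_f(ε,R) < ∞`
for every `ε ∈ (0, ε₂]` and every `R > 0`. -/
theorem Tf_lt_top_mono {d : ℕ} (f : Euc d → ℝ) (hf : IsProbDensity f)
    {ε₂ R₂ : ℝ} (hε₂ : 0 < ε₂) (hR₂ : 0 < R₂) (hT : Tf f ε₂ R₂ < ⊤) :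
    ∀ ε ∈ Ioc (0 : ℝ) ε₂, ∀ R > (0 : ℝ), Tf f ε R < ⊤ := by
  rintro ε ⟨hε, hεε₂⟩ R -
  have hint : Integrable f := hf.integrable
  have hTε : Tf f ε R₂ < ⊤ :=
    (Tf_le_lintegral_add_Tf hf.1.aemeasurable hε.le hεε₂ R₂).trans_lt
      (ENNReal.add_lt_top.2 ⟨hint.lintegral_lt_top, hT⟩)
  exact Tf_lt_top_of_Tf_lt_top_radius (.of_forall hf.2.1) hint.locallyIntegrable hε.le hR₂ hTε R
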